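/- In the randomized controlled trial model with responses, for every attribute a : N → {0,1} with |a| > 0 and every position k ∈ {1,…,s}, the conditional effect of treatment given A_k = 1 satisfies: Pr(R_k = 1 | (T_k = 1) ∩ (A_k = 1)) − Pr(R_k = 1 | (T_k = 0) ∩ (A_k = 1)) = (1/|a|)·Σ_{i : a(i)=1} (τ_i − ν_i), where A_k = a(i_k) and |a| = #{i : a(i)=1}. -/

import Mathlib

/- Randomized controlled trial model with responses:
   a uniformly random injective s-tuple of individuals from `Fin n`
   (encoded as `Fin s ↪ Fin n`), an independent uniformly random t-element
   subset of positions `Fin s` (the treated positions), and, given these,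
   independent Bernoulli responses at each position: position `k` responds
   with probability `τ (i_k)` if treated and `ν (i_k)` if untreated. -/

open Finset BigOperators
open scoped Classical

namespace RCT

/-- Probability weight of a sample point `(σ, T, R)`. -/
noncomputable def w (n s t : ℕ) (τ ν : Fin n → ℝ)
    (ω : (Fin s ↪ Fin n) × Finset (Fin s) × (Fin s → Bool)) : ℝ :=
  ((Fintype.card (Fin s ↪ Fin n) : ℝ))⁻¹ *
    (if ω.2.1.card = t then ((s.choose t : ℝ))⁻¹ else 0) *
    ∏ k : Fin s,
      (if ω.2.2 k = true
        then (if k ∈ ω.2.1 then τ (ω.1 k) else ν (ω.1 k))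
        else 1 - (if k ∈ ω.2.1 then τ (ω.1 k) else ν (ω.1 k)))

/-- Probability of an event. -/
noncomputable def Pr (n s t : ℕ) (τ ν : Fin n → ℝ)
    (E : (Fin s ↪ Fin n) × Finset (Fin s) × (Fin s → Bool) → Prop) : ℝ :=
  ∑ ω : (Fin s ↪ Fin n) × Finset (Fin s) × (Fin s → Bool),
    if E ω then w n s t τ ν ω else 0

/-- Conditional probability `Pr (E | F)`. -/
noncomputable def cPr (n s t : ℕ) (τ ν : Fin n → ℝ)
    (E F : (Fin s ↪ Fin n) × Finset (Fin s) × (Fin s → Bool) → Prop) : ℝ :=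
  Pr n s t τ ν (fun ω => E ω ∧ F ω) / Pr n s t τ ν F

/-- Expectation of a real-valued random variable. -/
noncomputable def Ex (n s t : ℕ) (τ ν : Fin n → ℝ)
    (f : (Fin s ↪ Fin n) × Finset (Fin s) × (Fin s → Bool) → ℝ) : ℝ :=
  ∑ ω : (Fin s ↪ Fin n) × Finset (Fin s) × (Fin s → Bool), w n s t τ ν ω * f ω

/-!
The individual at position `k` is uniform on the population, position `k` is treated with
probability `t / s` independently of that individual, and given both, `R_k` is Bernoulli with
parameter `τ i_k` or `ν i_k`; the other positions sum out. Hence, for a subpopulation `A`,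
`Pr(R_k = 1, T_k = 1, i_k ∈ A) = (t / s) (1 / n) ∑_{i ∈ A} τ i` and
`Pr(T_k = 1, i_k ∈ A) = (t / s) (|A| / n)`, so the conditional response probability is the mean
of `τ` over `A`; likewise for untreated positions with `1 - t / s` and `ν`.
-/

section UniformCoordinate

variable {ι α M : Type*} [Fintype α] [AddCommMonoid M] [Module ℚ≥0 M]

theorem expect_perm_apply [DecidableEq α] (g : α → M) (x : α) :
    𝔼 π : Equiv.Perm α, g (π x) = 𝔼 y, g y := by
  have : Nonempty α := ⟨x⟩
  have independent_of_point (y : α) :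
      𝔼 π : Equiv.Perm α, g (π x) = 𝔼 π : Equiv.Perm α, g (π y) :=
    Fintype.expect_equiv (Equiv.mulRight (Equiv.swap x y)) _ _ fun π => by simp
  calc 𝔼 π : Equiv.Perm α, g (π x)
      = 𝔼 y, 𝔼 π : Equiv.Perm α, g (π y) := by
        simp_rw [← independent_of_point, Fintype.expect_const]
    _ = 𝔼 π : Equiv.Perm α, 𝔼 y, g (π y) := expect_comm _ _ _
    _ = 𝔼 π : Equiv.Perm α, 𝔼 y, g y :=
        expect_congr rfl fun π _ => Fintype.expect_equiv π _ _ fun _ => rfl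
    _ = 𝔼 y, g y := Fintype.expect_const _

-- The law of a uniform embedding is invariant under permutations of the codomain, so one may
-- average over all of them.
theorem expect_embedding_apply [Fintype ι] [Nonempty (ι ↪ α)] (g : α → M) (k : ι) :
    𝔼 σ : ι ↪ α, g (σ k) = 𝔼 x, g x := by
  have permute_values (π : Equiv.Perm α) :
      𝔼 σ : ι ↪ α, g (σ k) = 𝔼 σ : ι ↪ α, g (π (σ k)) :=
    (Fintype.expect_equiv (Equiv.embeddingCongr (Equiv.refl ι) π) _ _ fun σ => by simp).symm
  calc 𝔼 σ : ι ↪ α, g (σ k)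
      = 𝔼 π : Equiv.Perm α, 𝔼 σ : ι ↪ α, g (π (σ k)) := by
        simp_rw [← permute_values, Fintype.expect_const]
    _ = 𝔼 σ : ι ↪ α, 𝔼 π : Equiv.Perm α, g (π (σ k)) := expect_comm _ _ _
    _ = 𝔼 σ : ι ↪ α, 𝔼 x, g x := expect_congr rfl fun σ _ => expect_perm_apply g (σ k)
    _ = 𝔼 x, g x := Fintype.expect_const _

end UniformCoordinate

section UniformSubset

variable {α : Type*} [DecidableEq α] {S : Finset α} {k : α}

theorem card_filter_notMem_powersetCard_mul_card (hk : k ∈ S) (t : ℕ) :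
    #{T ∈ S.powersetCard t | k ∉ T} * #S = (#S).choose t * (#S - t) := by
  have avoiding_eq : {T ∈ S.powersetCard t | k ∉ T} = (S.erase k).powersetCard t := by
    ext T
    simp only [mem_filter, mem_powersetCard, subset_erase]
    tauto
  rw [avoiding_eq, card_powersetCard, ← card_erase_add_one hk, Nat.choose_mul_succ_eq]

theorem expect_powersetCard_ite_mem {K : Type*} [Field K] [CharZero K] (hk : k ∈ S) {t : ℕ}
    (ht : t ≤ #S) (x y : K) :
    𝔼 T ∈ S.powersetCard t, (if k ∈ T then x else y) =
      t / #S * x + (1 - t / #S) * y := by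
  have card_ne_zero : (#S : K) ≠ 0 := Nat.cast_ne_zero.mpr (card_ne_zero_of_mem hk)
  have choose_ne_zero : ((#S).choose t : K) ≠ 0 :=
    Nat.cast_ne_zero.mpr (Nat.choose_pos ht).ne'
  have card_avoiding : (#{T ∈ S.powersetCard t | k ∉ T} : K) * #S =
      (#S).choose t * (#S - t) := by
    rw [← Nat.cast_sub ht]
    exact_mod_cast card_filter_notMem_powersetCard_mul_card hk t
  have card_split : (#{T ∈ S.powersetCard t | k ∈ T} : K) +
      #{T ∈ S.powersetCard t | k ∉ T} = (#S).choose t := by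
    rw [← card_powersetCard]
    exact_mod_cast card_filter_add_card_filter_not (s := S.powersetCard t) (k ∈ ·)
  rw [expect_eq_sum_div_card, sum_ite, sum_const, sum_const, nsmul_eq_mul, nsmul_eq_mul,
    card_powersetCard]
  field_simp
  linear_combination (x * #S) * card_split + (y - x) * card_avoiding

end UniformSubset

theorem sum_mul_prod_eq_sum_mul {ι κ K : Type*} [Fintype ι] [DecidableEq ι] [Fintype κ]
    [CommSemiring K] {f : ι → κ → K} {k : ι} (hf : ∀ j ≠ k, ∑ b, f j b = 1) (g : κ → K) :
    ∑ R : ι → κ, g (R k) * ∏ j, f j (R j) = ∑ b, g b * f k b := by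
  have absorb (R : ι → κ) : g (R k) * ∏ j, f j (R j) =
      ∏ j, (if j = k then g (R j) else 1) * f j (R j) := by
    rw [prod_mul_distrib, Fintype.prod_ite_eq' k fun j => g (R j)]
  simp_rw [absorb, ← Fintype.prod_sum fun j b => (if j = k then g b else 1) * f j b]
  rw [Fintype.prod_eq_single k fun j hj => by simpa [hj] using hf j hj]
  simp

/-- The mass of `b` under the Bernoulli law with parameter `p`, used for the law of a single
response. It is defined for every real `p` and is a signed weight unless `0 ≤ p ≤ 1`. -/
def bernoulliMass (p : ℝ) (b : Bool) : ℝ := if b = true then p else 1 - p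

theorem sum_bernoulliMass (p : ℝ) : ∑ b, bernoulliMass p b = 1 := by
  simp [bernoulliMass]

section BernoulliMixture

variable {ι : Type*} [Fintype ι] [DecidableEq ι]

theorem expect_sum_bernoulliMass_mem (p : ι → ℝ) (A : Finset ι) :
    𝔼 i, ∑ b : Bool with i ∈ A, bernoulliMass (p i) b = #A / Fintype.card ι := by
  simp_rw [filter_const, sum_ite_index, sum_bernoulliMass]
  simp [Fintype.expect_eq_sum_div_card]

theorem expect_sum_bernoulliMass_true_mem (p : ι → ℝ) (A : Finset ι) :
    𝔼 i, ∑ b with b = true ∧ i ∈ A, bernoulliMass (p i) b =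
      (∑ i ∈ A, p i) / Fintype.card ι := by
  simp [sum_filter, bernoulliMass, Fintype.expect_eq_sum_div_card]

end BernoulliMixture

section Marginals

variable {n s t : ℕ} {τ ν : Fin n → ℝ}

theorem Ex_eq_expect (f : (Fin s ↪ Fin n) × Finset (Fin s) × (Fin s → Bool) → ℝ) :
    Ex n s t τ ν f = 𝔼 σ : Fin s ↪ Fin n, 𝔼 T ∈ univ.powersetCard t, ∑ R : Fin s → Bool,
      f (σ, T, R) * ∏ j, bernoulliMass (if j ∈ T then τ (σ j) else ν (σ j)) (R j) := by
  have powersetCard_eq : (univ : Finset (Fin s)).powersetCard t = univ.filter (#· = t) := by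
    ext T
    simp
  simp_rw [Ex, Fintype.sum_prod_type, Fintype.expect_eq_sum_div_card, expect_eq_sum_div_card,
    card_powersetCard, powersetCard_eq, sum_filter, sum_div, w, card_univ, Fintype.card_fin]
  refine sum_congr rfl fun σ _ => sum_congr rfl fun T _ => ?_
  split_ifs
  · simp_rw [sum_div]
    refine sum_congr rfl fun R _ => ?_
    simp only [bernoulliMass]
    ring
  · simp

theorem Pr_eq_Ex (E : (Fin s ↪ Fin n) × Finset (Fin s) × (Fin s → Bool) → Prop) :
    Pr n s t τ ν E = Ex n s t τ ν fun ω => if E ω then 1 else 0 := by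
  simp [Pr, Ex]

theorem Ex_position (hts : t ≤ s) (hsn : s ≤ n) (k : Fin s) (f g : Fin n → Bool → ℝ) :
    Ex n s t τ ν (fun ω => if k ∈ ω.2.1 then f (ω.1 k) (ω.2.2 k) else g (ω.1 k) (ω.2.2 k)) =
      𝔼 i, (t / s * ∑ b, f i b * bernoulliMass (τ i) b +
        (1 - t / s) * ∑ b, g i b * bernoulliMass (ν i) b) := by
  have : Nonempty (Fin s ↪ Fin n) := ⟨Fin.castLEEmb hsn⟩
  have sum_responses (σ : Fin s ↪ Fin n) (T : Finset (Fin s)) :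
      ∑ R : Fin s → Bool, (if k ∈ T then f (σ k) (R k) else g (σ k) (R k)) *
          ∏ j, bernoulliMass (if j ∈ T then τ (σ j) else ν (σ j)) (R j) =
        if k ∈ T then ∑ b, f (σ k) b * bernoulliMass (τ (σ k)) b
        else ∑ b, g (σ k) b * bernoulliMass (ν (σ k)) b := by
    rw [sum_mul_prod_eq_sum_mul
      (f := fun j => bernoulliMass (if j ∈ T then τ (σ j) else ν (σ j)))
      (fun _ _ => sum_bernoulliMass _) fun b => if k ∈ T then f (σ k) b else g (σ k) b]
    split_ifs <;> rfl
  have expect_assignments (x y : ℝ) :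
      𝔼 T ∈ (univ : Finset (Fin s)).powersetCard t, (if k ∈ T then x else y) =
        t / s * x + (1 - t / s) * y := by
    simpa using expect_powersetCard_ite_mem (mem_univ k) (by simpa using hts) x y
  simp_rw [Ex_eq_expect, sum_responses, expect_assignments]
  exact expect_embedding_apply (fun i => t / s * ∑ b, f i b * bernoulliMass (τ i) b +
    (1 - t / s) * ∑ b, g i b * bernoulliMass (ν i) b) k

end Marginals

section ConditionalResponse

variable {n s t : ℕ} {τ ν : Fin n → ℝ} {A : Finset (Fin n)}

theorem Pr_treated_and (hts : t ≤ s) (hsn : s ≤ n) (k : Fin s) (E : Fin n → Bool → Prop)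
    [∀ i, DecidablePred (E i)] :
    Pr n s t τ ν (fun ω => k ∈ ω.2.1 ∧ E (ω.1 k) (ω.2.2 k)) =
      t / s * 𝔼 i, ∑ b with E i b, bernoulliMass (τ i) b := by
  calc Pr n s t τ ν (fun ω => k ∈ ω.2.1 ∧ E (ω.1 k) (ω.2.2 k))
      = Ex n s t τ ν fun ω => if k ∈ ω.2.1 then if E (ω.1 k) (ω.2.2 k) then 1 else 0 else 0 := by
        simp only [Pr_eq_Ex, ← ite_and]
        congr!
    _ = t / s * 𝔼 i, ∑ b with E i b, bernoulliMass (τ i) b := by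
        rw [Ex_position hts hsn k (fun i b => if E i b then 1 else 0) fun _ _ => 0]
        simp [mul_expect, sum_filter]

theorem Pr_untreated_and (hts : t ≤ s) (hsn : s ≤ n) (k : Fin s) (E : Fin n → Bool → Prop)
    [∀ i, DecidablePred (E i)] :
    Pr n s t τ ν (fun ω => k ∉ ω.2.1 ∧ E (ω.1 k) (ω.2.2 k)) =
      (1 - t / s) * 𝔼 i, ∑ b with E i b, bernoulliMass (ν i) b := by
  calc Pr n s t τ ν (fun ω => k ∉ ω.2.1 ∧ E (ω.1 k) (ω.2.2 k))
      = Ex n s t τ ν fun ω => if k ∈ ω.2.1 then 0 else if E (ω.1 k) (ω.2.2 k) then 1 else 0 := by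
        simp only [Pr_eq_Ex, ← ite_not (k ∈ _), ← ite_and]
        congr!
    _ = (1 - t / s) * 𝔼 i, ∑ b with E i b, bernoulliMass (ν i) b := by
        rw [Ex_position hts hsn k (fun _ _ => 0) fun i b => if E i b then 1 else 0]
        simp [mul_expect, sum_filter]

-- `hG` encodes that `G` has probability `c`, independently of the uniform individual `i_k`, and
-- that given both, `R_k` is Bernoulli with parameter `p i_k`.
theorem cPr_response_eq_expect {k : Fin s} {G : Finset (Fin s) → Prop} {c : ℝ} {p : Fin n → ℝ}
    (hc : c ≠ 0)
    (hG : ∀ (E : Fin n → Bool → Prop) [∀ i, DecidablePred (E i)],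
      Pr n s t τ ν (fun ω => G ω.2.1 ∧ E (ω.1 k) (ω.2.2 k)) =
        c * 𝔼 i, ∑ b with E i b, bernoulliMass (p i) b)
    (hA : A.Nonempty) :
    cPr n s t τ ν (fun ω => ω.2.2 k = true) (fun ω => G ω.2.1 ∧ ω.1 k ∈ A) = 𝔼 i ∈ A, p i := by
  have hn : (n : ℝ) ≠ 0 := Nat.cast_ne_zero.mpr hA.choose.pos.ne'
  have hcard : (#A : ℝ) ≠ 0 := Nat.cast_ne_zero.mpr hA.card_ne_zero
  have Pr_conditioning :
      Pr n s t τ ν (fun ω => G ω.2.1 ∧ ω.1 k ∈ A) = c * (#A / n) := by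
    rw [hG fun i _ => i ∈ A, expect_sum_bernoulliMass_mem, Fintype.card_fin]
  have Pr_response :
      Pr n s t τ ν (fun ω => ω.2.2 k = true ∧ G ω.2.1 ∧ ω.1 k ∈ A) =
        c * ((∑ i ∈ A, p i) / n) := by
    simp_rw [and_left_comm (b := G _)]
    rw [hG fun i b => b = true ∧ i ∈ A, expect_sum_bernoulliMass_true_mem, Fintype.card_fin]
  have conditioning_ne_zero : c * (#A / n) ≠ 0 := mul_ne_zero hc (div_ne_zero hcard hn)
  rw [cPr, Pr_conditioning, Pr_response, div_eq_iff conditioning_ne_zero, ← card_mul_expect]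
  ring

theorem cPr_response_treated (ht : 0 < t) (hts : t ≤ s) (hsn : s ≤ n) (hA : A.Nonempty)
    (k : Fin s) :
    cPr n s t τ ν (fun ω => ω.2.2 k = true) (fun ω => k ∈ ω.2.1 ∧ ω.1 k ∈ A) =
      𝔼 i ∈ A, τ i := by
  have treated_pos : (0 : ℝ) < t / s := by
    have hs : 0 < s := k.pos
    positivity
  exact cPr_response_eq_expect (G := (k ∈ ·)) treated_pos.ne' (Pr_treated_and hts hsn k) hA

theorem cPr_response_untreated (hts : t < s) (hsn : s ≤ n) (hA : A.Nonempty) (k : Fin s) :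
    cPr n s t τ ν (fun ω => ω.2.2 k = true) (fun ω => k ∉ ω.2.1 ∧ ω.1 k ∈ A) =
      𝔼 i ∈ A, ν i := by
  have untreated_pos : (0 : ℝ) < 1 - t / s := by
    rw [sub_pos, div_lt_one (Nat.cast_pos.mpr k.pos)]
    exact Nat.cast_lt.mpr hts
  exact cPr_response_eq_expect (G := (k ∉ ·)) untreated_pos.ne'
    (Pr_untreated_and hts.le hsn k) hA

end ConditionalResponse

theorem conditional_effect_attribute_one_general {n s t : ℕ} (ht : 0 < t) (hts : t < s)
    (hsn : s ≤ n) (τ ν : Fin n → ℝ) {A : Finset (Fin n)} (hA : A.Nonempty) (k : Fin s) :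
    cPr n s t τ ν (fun ω => ω.2.2 k = true) (fun ω => k ∈ ω.2.1 ∧ ω.1 k ∈ A) -
      cPr n s t τ ν (fun ω => ω.2.2 k = true) (fun ω => k ∉ ω.2.1 ∧ ω.1 k ∈ A) =
      𝔼 i ∈ A, (τ i - ν i) := by
  rw [cPr_response_treated ht hts.le hsn hA, cPr_response_untreated hts hsn hA,
    expect_sub_distrib]

/-- Conditional effect of treatment given `A_k = 1`:
`Pr(R_k = 1 | (T_k = 1) ∩ (A_k = 1)) − Pr(R_k = 1 | (T_k = 0) ∩ (A_k = 1))
  = (1/|a|)·Σ_{i : a i = 1} (τ i − ν i)`. -/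
theorem conditional_effect_attribute_one (n s t : ℕ) (ht : 0 < t) (hts : t < s) (hsn : s ≤ n)
    (τ ν : Fin n → ℝ) (hτ : ∀ i, τ i ∈ Set.Icc (0 : ℝ) 1) (hν : ∀ i, ν i ∈ Set.Icc (0 : ℝ) 1)
    (a : Fin n → Fin 2) (ha : 0 < (univ.filter (fun i => a i = 1)).card) (k : Fin s) :
    cPr n s t τ ν (fun ω => ω.2.2 k = true) (fun ω => k ∈ ω.2.1 ∧ a (ω.1 k) = 1) -
      cPr n s t τ ν (fun ω => ω.2.2 k = true) (fun ω => k ∉ ω.2.1 ∧ a (ω.1 k) = 1) =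
      (1 / ((univ.filter (fun i => a i = 1)).card : ℝ)) *
        ∑ i ∈ univ.filter (fun i => a i = 1), (τ i - ν i) := by
  simpa [expect_eq_sum_div_card, div_eq_inv_mul] using
    conditional_effect_attribute_one_general ht hts hsn τ ν (card_pos.mp ha) k

end RCT
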